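/- Let p be an odd prime, let (G,N) be a pair of finite p-groups, let σ : N* → G be a relative central extension of (G,N), and let K be a G-invariant subgroup of N*. Then [K,G] ≤ 𝕌₁(K) if and only if [K,G] ≤ 𝕌₁(K)·[K, _2 G]. (Lemma 3.7(i) of the paper: the right-hand condition is the unfolded form of the condition [K/[K, _2 G], G] ≤ 𝕌₁(K/[K, _2 G]) in the quotient.) -/

import Mathlib

/-!
Modulo the `G`-invariant (hence normal) subgroup `A = 𝕌₁(K)`, the hypothesis says
`[K, G] = [K, _2 G]`, so that `[K, G] ≤ A [K, _n G]` for every `n ≥ 1`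
(`commSub_le_sup_commSub` feeds the induction). On the other hand the action of `G` on `N*` is
nilpotent: `σ` carries `[K, _n G]` into the `n`-th term of the lower central series of `G`, which
is eventually trivial as `G` is a finite `p`-group, so some `[K, _n G]` lies in `ker σ`, where `G`
acts trivially, and `[K, _{n+1} G] = 1` (`exists_iterComm_eq_bot`). Hence `[K, G] ≤ A`.
-/

/-- The iterated commutator subgroup `[N, _k G]`. -/
def iterCommG {G : Type*} [Group G] (N : Subgroup G) : ℕ → Subgroup G
  | 0 => N
  | k + 1 => ⁅iterCommG N k, (⊤ : Subgroup G)⁆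

/-- `𝕌_i(H)`: the subgroup generated by all `p^i`-th powers of elements of `H`. -/
def pPow {G : Type*} [Group G] (p i : ℕ) (H : Subgroup G) : Subgroup G :=
  Subgroup.closure {x | ∃ h ∈ H, x = h ^ p ^ i}

/-- A relative central extension of the pair `(G, N)`. -/
structure RelCentralExt {M G : Type*} [Group M] [Group G] (σ : M →* G) (N : Subgroup G) where
  /-- the action of `G` on `M`, written `m ↦ m^g` in the paper -/
  act : M → G → M
  act_mul : ∀ m n g, act (m * n) g = act m g * act n g
  act_one : ∀ m, act m 1 = m
  act_act : ∀ m g h, act (act m g) h = act m (g * h)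
  range_eq : σ.range = N
  sigma_act : ∀ m g, σ (act m g) = g⁻¹ * σ m * g
  act_sigma : ∀ m m₁, act m (σ m₁) = m₁⁻¹ * m * m₁
  ker_act : ∀ a ∈ σ.ker, ∀ g : G, act a g = a

namespace RelCentralExt

variable {M G : Type*} [Group M] [Group G] {σ : M →* G} {N : Subgroup G}

/-- The `G`-commutator `[m, g] = m⁻¹ · m^g`. -/
def cmt (E : RelCentralExt σ N) (m : M) (g : G) : M := m⁻¹ * E.act m g

/-- The subgroup `[M', G]` generated by all `G`-commutators `[m, g]`, `m ∈ M'`, `g ∈ G`. -/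
def commSub (E : RelCentralExt σ N) (M' : Subgroup M) : Subgroup M :=
  Subgroup.closure {x | ∃ m ∈ M', ∃ g : G, x = E.cmt m g}

/-- The iterated subgroup `[M', _n G]`. -/
def iterComm (E : RelCentralExt σ N) (M' : Subgroup M) : ℕ → Subgroup M
  | 0 => M'
  | n + 1 => E.commSub (E.iterComm M' n)

end RelCentralExt

open Pointwise

namespace RelCentralExt

variable {M G : Type*} [Group M] [Group G] {σ : M →* G} {N : Subgroup G}

/-- The action of a fixed element of `G` as an endomorphism of `M`. -/
def actHom (E : RelCentralExt σ N) (g : G) : M →* M :=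
  MonoidHom.mk' (fun m => E.act m g) fun m n => E.act_mul m n g

/-- Elements of `M` conjugate through `σ`, so an invariant subgroup is normal. -/
theorem normal_of_invariant (E : RelCentralExt σ N) {A : Subgroup M}
    (hA : ∀ m ∈ A, ∀ g : G, E.act m g ∈ A) : A.Normal := by
  refine ⟨fun a ha m => ?_⟩
  have h := hA a ha (σ m⁻¹)
  rwa [E.act_sigma, inv_inv] at h

theorem pPow_invariant (E : RelCentralExt σ N) (p i : ℕ) {K : Subgroup M}
    (hK : ∀ m ∈ K, ∀ g : G, E.act m g ∈ K) :
    ∀ m ∈ pPow p i K, ∀ g : G, E.act m g ∈ pPow p i K := by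
  intro m hm g
  have h : pPow p i K ≤ (pPow p i K).comap (E.actHom g) := by
    refine (Subgroup.closure_le _).2 ?_
    rintro _ ⟨k, hk, rfl⟩
    change E.actHom g (k ^ p ^ i) ∈ pPow p i K
    rw [map_pow]
    exact Subgroup.subset_closure ⟨_, hK k hk g, rfl⟩
  exact h hm

/-- The operation `[·, G]` is monotone modulo an invariant subgroup `A`, because
`[a y, g] = y⁻¹ [a, g] y · [y, g]`. -/
theorem commSub_le_sup_commSub (E : RelCentralExt σ N) {A X Y : Subgroup M}
    (hA : ∀ m ∈ A, ∀ g : G, E.act m g ∈ A) (h : X ≤ A ⊔ Y) :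
    E.commSub X ≤ A ⊔ E.commSub Y := by
  have hn : A.Normal := E.normal_of_invariant hA
  refine (Subgroup.closure_le _).2 ?_
  rintro _ ⟨x, hx, g, rfl⟩
  obtain ⟨a, ha, y, hy, rfl⟩ := Subgroup.mem_sup_of_normal_left.1 (h hx)
  have e : E.cmt (a * y) g = y⁻¹ * (a⁻¹ * E.act a g) * y⁻¹⁻¹ * E.cmt y g := by
    simp only [cmt, E.act_mul]
    group
  rw [e]
  exact Subgroup.mul_mem_sup (hn.conj_mem _ (A.mul_mem (A.inv_mem ha) (hA a ha g)) _)
    (Subgroup.subset_closure ⟨y, hy, g, rfl⟩)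

open scoped commutatorElement in
theorem iterComm_le_comap_lowerCentralSeries (E : RelCentralExt σ N) (K : Subgroup M) (n : ℕ) :
    E.iterComm K n ≤ (Subgroup.lowerCentralSeries (⊤ : Subgroup G) n).comap σ := by
  induction n with
  | zero => intro x _; simp
  | succ n ih =>
    refine (Subgroup.closure_le _).2 ?_
    rintro _ ⟨x, hx, g, rfl⟩
    have e : σ (E.cmt x g) = ⁅(σ x)⁻¹, g⁻¹⁆ := by
      simp only [cmt, map_mul, map_inv, E.sigma_act, commutatorElement_def]
      group
    change σ (E.cmt x g) ∈ Subgroup.lowerCentralSeries (⊤ : Subgroup G) (n + 1)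
    rw [e]
    exact Subgroup.commutator_mem_commutator (Subgroup.inv_mem _ (ih hx)) (Subgroup.mem_top _)

/-- A nilpotent group `G` acts nilpotently in a relative central extension. -/
theorem exists_iterComm_eq_bot [Group.IsNilpotent G] (E : RelCentralExt σ N) (K : Subgroup M) :
    ∃ n, E.iterComm K (n + 1) = ⊥ := by
  obtain ⟨n, hn⟩ := Subgroup.nilpotent_iff_lowerCentralSeries.1 ‹Group.IsNilpotent G›
  refine ⟨n, (Subgroup.closure_eq_bot_iff).2 ?_⟩
  rintro _ ⟨x, hx, g, rfl⟩
  have hk : x ∈ σ.ker := by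
    have h := E.iterComm_le_comap_lowerCentralSeries K n hx
    rwa [hn] at h
  simp [cmt, E.ker_act x hk g]

end RelCentralExt

/-- Lemma 3.7(i): let `p` be an odd prime, `(G, N)` a pair of finite `p`-groups,
`σ : N* → G` a relative central extension of `(G, N)`, and `K` a `G`-invariant
subgroup of `N*`. Then `[K, G] ≤ 𝕌₁(K)` iff `[K, G] ⊆ 𝕌₁(K) · [K, _2 G]` (the latter
being the unfolded form of `[K/[K, _2 G], G] ≤ 𝕌₁(K/[K, _2 G])`). -/
theorem stmt_9 {G : Type*} [Group G] [Finite G] (p : ℕ) (hp : p.Prime) (hodd : Odd p)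
    (hG : IsPGroup p G) (N : Subgroup G) (hN : N.Normal)
    {Nstar : Type*} [Group Nstar] (σ : Nstar →* G) (E : RelCentralExt σ N)
    (K : Subgroup Nstar) (hKinv : ∀ m ∈ K, ∀ g : G, E.act m g ∈ K) :
    E.commSub K ≤ pPow p 1 K ↔
      (E.commSub K : Set Nstar) ⊆ (pPow p 1 K : Set Nstar) * (E.iterComm K 2 : Set Nstar) := by
  constructor
  · intro h x hx
    exact Set.mem_mul.2 ⟨x, h hx, 1, Subgroup.one_mem _, mul_one x⟩
  · intro h
    have : Fact p.Prime := ⟨hp⟩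
    have : Group.IsNilpotent G := hG.isNilpotent
    have hA := E.pPow_invariant p 1 hKinv
    have h2 : E.iterComm K 1 ≤ pPow p 1 K ⊔ E.iterComm K 2 := by
      intro x hx
      obtain ⟨a, ha, y, hy, rfl⟩ := Set.mem_mul.1 (h hx)
      exact Subgroup.mul_mem_sup ha hy
    have step : ∀ n, E.iterComm K (n + 1) ≤ pPow p 1 K ⊔ E.iterComm K (n + 2) := by
      intro n
      induction n with
      | zero => exact h2
      | succ n ih => exact E.commSub_le_sup_commSub hA ih
    have all : ∀ n, E.iterComm K 1 ≤ pPow p 1 K ⊔ E.iterComm K (n + 1) := by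
      intro n
      induction n with
      | zero => exact le_sup_right
      | succ n ih => exact ih.trans (sup_le le_sup_left (step n))
    obtain ⟨n, hn⟩ := E.exists_iterComm_eq_bot K
    have h1 := all n
    rwa [hn, sup_bot_eq] at h1
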